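/- Assume 0<k0≤ρ0(R)≤k1 on [0,1] and that the material is homogeneous: Φ(R,v1,v2,v3)=Φ̃(v1,v2,v3) with Φ̃:(0,∞)³→[0,∞) symmetric. Let λ>0 and let r be a minimizer of I over A_λ. Suppose there exists λ̂>λ with the following property (which holds for any λ̂ below the critical boundary displacement of the material Φ̃): for every R₀∈(0,1] and every absolutely continuous s:[0,R₀]→[0,∞) with s'(R)>0 a.e., s(0)>0, s(R₀)=λ̂R₀ and ∫₀^{R₀} Φ̃(s'(R), s(R)/R, s(R)/R) R² dR < ∞, one has ∫₀^{R₀} Φ̃(s'(R), s(R)/R, s(R)/R) R² dR > (R₀³/3) Φ̃(λ̂,λ̂,λ̂). Then r(0)=0. -/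

import Mathlib

open MeasureTheory Real Set Filter

/-- `M_R = 4π ∫₀^R ρ0(u) u² du`. -/
noncomputable def Mfun (ρ0 : ℝ → ℝ) (R : ℝ) : ℝ := 4 * π * ∫ u in (0:ℝ)..R, ρ0 u * u ^ 2

/-- Mechanical energy for a homogeneous stored energy `Φ̃`. -/
noncomputable def Imec (Φt : ℝ → ℝ → ℝ → ℝ) (r r' : ℝ → ℝ) : ℝ :=
  ∫ R in Ioo (0:ℝ) 1, Φt (r' R) (r R / R) (r R / R) * R ^ 2

/-- Gravitational potential energy. -/
noncomputable def Ipot (ρ0 : ℝ → ℝ) (r : ℝ → ℝ) : ℝ :=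
  ∫ R in Ioo (0:ℝ) 1, ρ0 R * Mfun ρ0 R * (r R)⁻¹ * R ^ 2

/-- Total energy `I = I_mec − I_pot`. -/
noncomputable def Ifun (Φt : ℝ → ℝ → ℝ → ℝ) (ρ0 : ℝ → ℝ) (r r' : ℝ → ℝ) : ℝ :=
  Imec Φt r r' - Ipot ρ0 r

/-- The admissible set `A_λ` (homogeneous material). -/
def Adm (Φt : ℝ → ℝ → ℝ → ℝ) (lam : ℝ) (r r' : ℝ → ℝ) : Prop :=
  IntervalIntegrable r' volume 0 1 ∧
  (∀ x ∈ Icc (0:ℝ) 1, r x = r 0 + ∫ t in (0:ℝ)..x, r' t) ∧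
  (∀ᵐ R ∂volume.restrict (Ioo (0:ℝ) 1), 0 < r' R) ∧
  r 1 = lam ∧ 0 ≤ r 0 ∧
  IntegrableOn (fun R => Φt (r' R) (r R / R) (r R / R) * R ^ 2) (Ioo (0:ℝ) 1)

/-!
Suppose `r 0 > 0`. Since `r 1 = λ ≤ λ̂`, the graph of `r` meets the ray `R ↦ λ̂ R` for a first time
at some `c ∈ (0, 1]`, so `r` restricted to `[0, c]` is a cavitating competitor with boundary
displacement `λ̂ c`. Filling the cavity, i.e. replacing `r` by `λ̂ R` on `[0, c]`, gives another
admissible deformation, which has strictly less mechanical energy by subcriticality and, because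
it lies below `r` everywhere, at least as much gravitational potential `Ipot`. This contradicts
minimality. The potential of the new deformation is finite although it vanishes at the origin,
because it grows at least linearly there and `R² / R` is harmless.
-/

theorem exists_first_eq_of_lt_of_le {α δ : Type*} [ConditionallyCompleteLinearOrder α]
    [DenselyOrdered α] [TopologicalSpace α] [OrderTopology α] [LinearOrder δ] [TopologicalSpace δ]
    [OrderClosedTopology δ] {f g : α → δ} {a b : α} (hab : a ≤ b) (hf : ContinuousOn f (Icc a b))
    (hg : ContinuousOn g (Icc a b)) (ha : g a < f a) (hb : f b ≤ g b) :
    ∃ c ∈ Ioc a b, f c = g c ∧ ∀ x ∈ Ico a c, g x < f x := by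
  have hcompact : IsCompact {x ∈ Icc a b | f x ≤ g x} :=
    isCompact_Icc.of_isClosed_subset (isClosed_Icc.isClosed_le hf hg) (sep_subset _ _)
  obtain ⟨c, ⟨hc, hfgc⟩, hleast⟩ := hcompact.exists_isLeast ⟨b, right_mem_Icc.2 hab, hb⟩
  have hsub : Icc a c ⊆ Icc a b := Icc_subset_Icc_right hc.2
  obtain ⟨d, hd, hfgd⟩ := isPreconnected_Icc.intermediate_value₂ (right_mem_Icc.2 hc.1)
    (left_mem_Icc.2 hc.1) (hf.mono hsub) (hg.mono hsub) hfgc ha.le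
  obtain rfl : d = c := le_antisymm hd.2 (hleast ⟨hsub hd, hfgd.le⟩)
  have hac : a ≠ d := by
    rintro rfl
    exact ha.not_ge hfgc
  exact ⟨d, ⟨hc.1.lt_of_ne hac, hc.2⟩, hfgd, fun x hx =>
    not_le.1 fun hfgx => hx.2.not_ge (hleast ⟨⟨hx.1, hx.2.le.trans hc.2⟩, hfgx⟩)⟩

theorem integral_piecewise_lt_integral {α : Type*} [MeasurableSpace α] {μ : Measure α}
    {f g : α → ℝ} {s : Set α} [DecidablePred (· ∈ s)] (hs : MeasurableSet s)
    (hf : IntegrableOn f s μ) (hg : Integrable g μ)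
    (hfg : ∫ x in s, f x ∂μ < ∫ x in s, g x ∂μ) :
    ∫ x, s.piecewise f g x ∂μ < ∫ x, g x ∂μ := by
  rw [integral_piecewise hs hf hg.integrableOn, ← integral_add_compl hs hg]
  gcongr

theorem restrict_Ioo_restrict_Iio {α : Type*} [LinearOrder α] [TopologicalSpace α]
    [OrderClosedTopology α] [MeasurableSpace α] [OpensMeasurableSpace α] {μ : Measure α}
    {a b c : α} (hcb : c ≤ b) :
    (μ.restrict (Ioo a b)).restrict (Iio c) = μ.restrict (Ioo a c) := by
  rw [Measure.restrict_restrict measurableSet_Iio, inter_comm, Ioo_inter_Iio, min_eq_right hcb]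

/-! ### Functions of class `W^{1,1}` on an interval -/

/-- `f` is absolutely continuous on `[a, b]` with derivative `f'` almost everywhere, that is
`f ∈ W^{1,1}(a, b)` with weak derivative `f'`, encoded by the fundamental theorem of calculus.
For incomplete `E` the integrals are `0` and the condition only says that `f` is constant. -/
structure HasIntegrableDerivOn {E : Type*} [NormedAddCommGroup E] [NormedSpace ℝ E]
    (f f' : ℝ → E) (a b : ℝ) : Prop where
  intervalIntegrable : IntervalIntegrable f' volume a b
  eq_add_integral : ∀ x ∈ Icc a b, f x = f a + ∫ t in a..x, f' t

namespace HasIntegrableDerivOn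

variable {E : Type*} [NormedAddCommGroup E] [NormedSpace ℝ E] {f f' g g' : ℝ → E} {a b c : ℝ}

theorem continuousOn (h : HasIntegrableDerivOn f f' a b) : ContinuousOn f (Icc a b) :=
  (continuousOn_const.add ((intervalIntegral.continuousOn_primitive_interval'
    h.intervalIntegrable left_mem_uIcc).mono Icc_subset_uIcc)).congr h.eq_add_integral

theorem mono_right (h : HasIntegrableDerivOn f f' a b) (hc : c ∈ Icc a b) :
    HasIntegrableDerivOn f f' a c where
  intervalIntegrable :=
    h.intervalIntegrable.mono_set (uIcc_subset_uIcc_left (Icc_subset_uIcc hc))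
  eq_add_integral x hx := h.eq_add_integral x ⟨hx.1, hx.2.trans hc.2⟩

theorem mono_left (h : HasIntegrableDerivOn f f' a b) (hc : c ∈ Icc a b) :
    HasIntegrableDerivOn f f' c b where
  intervalIntegrable :=
    h.intervalIntegrable.mono_set (uIcc_subset_uIcc_right (Icc_subset_uIcc hc))
  eq_add_integral x hx := by
    have hx' : x ∈ Icc a b := ⟨hc.1.trans hx.1, hx.2⟩
    rw [h.eq_add_integral x hx', h.eq_add_integral c hc, add_assoc,
      intervalIntegral.integral_add_adjacent_intervals (h.mono_right hc).intervalIntegrable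
        ((h.mono_right hx').intervalIntegrable.mono_set
          (uIcc_subset_uIcc_right (Icc_subset_uIcc ⟨hc.1, hx.1⟩)))]

theorem congr (h : HasIntegrableDerivOn f f' a b) (hab : a ≤ b) (hfg : EqOn f g (Icc a b))
    (hfg' : EqOn f' g' (Ioo a b)) : HasIntegrableDerivOn g g' a b where
  intervalIntegrable := h.intervalIntegrable.congr_uIoo (by rwa [uIoo_of_le hab])
  eq_add_integral x hx := by
    rw [← hfg hx, ← hfg (left_mem_Icc.2 hab), h.eq_add_integral x hx,
      intervalIntegral.integral_congr_Ioo_of_le hx.1 (hfg'.mono (Ioo_subset_Ioo_right hx.2))]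

theorem trans (hac : HasIntegrableDerivOn f f' a c) (hcb : HasIntegrableDerivOn f f' c b)
    (hc : c ∈ Icc a b) : HasIntegrableDerivOn f f' a b where
  intervalIntegrable := hac.intervalIntegrable.trans hcb.intervalIntegrable
  eq_add_integral x hx := by
    rcases le_total x c with hxc | hcx
    · exact hac.eq_add_integral x ⟨hx.1, hxc⟩
    · have hcx' := hcb.mono_right ⟨hcx, hx.2⟩
      rw [hcb.eq_add_integral x ⟨hcx, hx.2⟩, hac.eq_add_integral c (right_mem_Icc.2 hc.1),
        add_assoc, intervalIntegral.integral_add_adjacent_intervals hac.intervalIntegrable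
          hcx'.intervalIntegrable]

theorem piecewise_Iio (hf : HasIntegrableDerivOn f f' a c) (hg : HasIntegrableDerivOn g g' c b)
    (hc : c ∈ Icc a b) (hfg : f c = g c) :
    HasIntegrableDerivOn ((Iio c).piecewise f g) ((Iio c).piecewise f' g') a b := by
  refine (hf.congr hc.1 (fun x hx => ?_) fun x hx => ?_).trans
    (hg.congr hc.2 (fun x hx => ?_) fun x hx => ?_) hc
  · rcases hx.2.lt_or_eq with hxc | hxc
    · exact (piecewise_eq_of_mem (Iio c) _ _ hxc).symm
    · rw [hxc, piecewise_eq_of_notMem (Iio c) _ _ self_notMem_Iio, hfg]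
  · exact (piecewise_eq_of_mem (Iio c) _ _ hx.2).symm
  · exact (piecewise_eq_of_notMem _ _ _ (notMem_Iio.2 hx.1)).symm
  · exact (piecewise_eq_of_notMem _ _ _ (notMem_Iio.2 hx.1.le)).symm

theorem monotoneOn {f f' : ℝ → ℝ} (h : HasIntegrableDerivOn f f' a b)
    (hf' : ∀ᵐ x ∂volume.restrict (Ioo a b), 0 ≤ f' x) : MonotoneOn f (Icc a b) := by
  intro x hx y hy hxy
  have hfxy := (h.mono_left hx).eq_add_integral y ⟨hxy, hy.2⟩
  have hnonneg : 0 ≤ ∫ t in x..y, f' t := by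
    refine intervalIntegral.integral_nonneg_of_ae_restrict hxy ?_
    rw [← restrict_Ioo_eq_restrict_Icc]
    exact ae_restrict_of_ae_restrict_of_subset (Ioo_subset_Ioo hx.1 hy.2) hf'
  linarith

end HasIntegrableDerivOn

theorem hasIntegrableDerivOn_const_mul (k a b : ℝ) :
    HasIntegrableDerivOn (fun x => k * x) (fun _ => k) a b where
  intervalIntegrable := intervalIntegrable_const
  eq_add_integral x _ := by
    rw [intervalIntegral.integral_const, smul_eq_mul]
    ring

/-! ### Mechanical energy -/

/-- The integrand of `Imec`: the stored energy of the radial deformation `r` with derivative `r'`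
per unit of `dR`, up to the factor `4π`. -/
noncomputable def radialEnergyDensity (Φt : ℝ → ℝ → ℝ → ℝ) (r r' : ℝ → ℝ) (R : ℝ) : ℝ :=
  Φt (r' R) (r R / R) (r R / R) * R ^ 2

section radialEnergyDensity

variable (Φt : ℝ → ℝ → ℝ → ℝ)

theorem radialEnergyDensity_piecewise (s : Set ℝ) [DecidablePred (· ∈ s)] (f f' g g' : ℝ → ℝ) :
    radialEnergyDensity Φt (s.piecewise f g) (s.piecewise f' g') =
      s.piecewise (radialEnergyDensity Φt f f') (radialEnergyDensity Φt g g') := by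
  funext R
  by_cases hR : R ∈ s <;> simp only [radialEnergyDensity, hR, piecewise_eq_of_mem,
    piecewise_eq_of_notMem, not_false_eq_true]

theorem eqOn_radialEnergyDensity_const_mul (k c : ℝ) :
    EqOn (radialEnergyDensity Φt (fun R => k * R) fun _ => k) (fun R => Φt k k k * R ^ 2)
      (Ioo 0 c) := by
  intro R hR
  simp only [radialEnergyDensity, mul_div_cancel_right₀ k hR.1.ne']

theorem integrableOn_radialEnergyDensity_const_mul (k c : ℝ) :
    IntegrableOn (radialEnergyDensity Φt (fun R => k * R) fun _ => k) (Ioo 0 c) := by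
  rw [integrableOn_congr_fun (eqOn_radialEnergyDensity_const_mul Φt k c) measurableSet_Ioo]
  exact Continuous.integrableOn_Icc (by fun_prop) |>.mono_set Ioo_subset_Icc_self

theorem setIntegral_radialEnergyDensity_const_mul (k : ℝ) {c : ℝ} (hc : 0 ≤ c) :
    ∫ R in Ioo 0 c, radialEnergyDensity Φt (fun R => k * R) (fun _ => k) R =
      c ^ 3 / 3 * Φt k k k := by
  rw [setIntegral_congr_fun measurableSet_Ioo (eqOn_radialEnergyDensity_const_mul Φt k c),
    ← integral_Ioc_eq_integral_Ioo, ← intervalIntegral.integral_of_le hc,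
    intervalIntegral.integral_const_mul, integral_pow]
  push_cast
  ring

end radialEnergyDensity

/-! ### Gravitational potential energy -/

section Potential

variable {ρ0 : ℝ → ℝ}

theorem Mfun_nonneg {R : ℝ} (hR : 0 ≤ R) (hρ : ∀ u ∈ Ioc 0 R, 0 ≤ ρ0 u) : 0 ≤ Mfun ρ0 R := by
  have hint : 0 ≤ ∫ u in (0 : ℝ)..R, ρ0 u * u ^ 2 := by
    rw [intervalIntegral.integral_of_le hR]
    exact setIntegral_nonneg measurableSet_Ioc fun u hu => mul_nonneg (hρ u hu) (sq_nonneg u)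
  unfold Mfun
  positivity

theorem continuousOn_Mfun (hρ : IntegrableOn (fun R => R * ρ0 R) (Ioo 0 1)) :
    ContinuousOn (Mfun ρ0) (Icc 0 1) := by
  have hρIcc : IntegrableOn (fun R => R * ρ0 R) (Icc 0 1) := by
    rwa [integrableOn_Icc_iff_integrableOn_Ioo]
  have hsq : IntegrableOn (fun R => ρ0 R * R ^ 2) (Icc 0 1) :=
    (hρIcc.continuousOn_mul continuousOn_id isCompact_Icc).congr_fun
      (fun R _ => by simp only [id]; ring) measurableSet_Icc
  exact continuousOn_const.mul (intervalIntegral.continuousOn_primitive_interval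
    (by rwa [uIcc_of_le zero_le_one])) |>.mono Icc_subset_uIcc

theorem integrableOn_Ipot_integrand {r : ℝ → ℝ} {m : ℝ} (hm : 0 < m)
    (hρ : IntegrableOn (fun R => R * ρ0 R) (Ioo 0 1)) (hr : ContinuousOn r (Ioo 0 1))
    (hmr : ∀ R ∈ Ioo (0 : ℝ) 1, m * R ≤ r R) :
    IntegrableOn (fun R => ρ0 R * Mfun ρ0 R * (r R)⁻¹ * R ^ 2) (Ioo 0 1) := by
  have hM := continuousOn_Mfun hρ
  obtain ⟨C, hC⟩ := isCompact_Icc.exists_bound_of_continuousOn hM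
  have hpos : ∀ R ∈ Ioo (0 : ℝ) 1, 0 < r R := fun R hR =>
    (mul_pos hm hR.1).trans_le (hmr R hR)
  have hcont : ContinuousOn (fun R => Mfun ρ0 R * (R / r R)) (Ioo 0 1) :=
    (hM.mono Ioo_subset_Icc_self).mul (continuousOn_id.div hr fun R hR => (hpos R hR).ne')
  have hbound : ∀ R ∈ Ioo (0 : ℝ) 1, ‖Mfun ρ0 R * (R / r R)‖ ≤ C * m⁻¹ := by
    intro R hR
    have hquot : R / r R ≤ m⁻¹ := by
      rw [div_le_iff₀ (hpos R hR), inv_mul_eq_div, le_div_iff₀ hm, mul_comm]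
      exact hmr R hR
    have hquot_nonneg : 0 ≤ R / r R := div_nonneg hR.1.le (hpos R hR).le
    have hCR := hC R (Ioo_subset_Icc_self hR)
    rw [norm_mul, Real.norm_of_nonneg hquot_nonneg]
    exact mul_le_mul hCR hquot hquot_nonneg ((norm_nonneg _).trans hCR)
  refine (hρ.mul_bdd (hcont.aestronglyMeasurable measurableSet_Ioo)
    (ae_restrict_of_forall_mem measurableSet_Ioo hbound)).congr (.of_forall fun R => ?_)
  simp only [div_eq_mul_inv]
  ring

theorem integrableOn_mul_of_mem_Icc {k0 k1 : ℝ}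
    (hρmeas : AEMeasurable ρ0 (volume.restrict (Ioo 0 1)))
    (hρ : ∀ R ∈ Ioo (0 : ℝ) 1, ρ0 R ∈ Icc k0 k1) :
    IntegrableOn (fun R => R * ρ0 R) (Ioo 0 1) :=
  IntegrableOn.continuousOn_mul_of_subset continuousOn_id
    (Integrable.of_mem_Icc k0 k1 hρmeas (ae_restrict_of_forall_mem measurableSet_Ioo hρ))
    isCompact_Icc measurableSet_Ioo Ioo_subset_Icc_self

theorem Ipot_le_Ipot_of_le {r s : ℝ → ℝ} (hρ : ∀ R ∈ Ioo (0 : ℝ) 1, 0 ≤ ρ0 R)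
    (hs : ∀ R ∈ Ioo (0 : ℝ) 1, 0 < s R) (hsr : ∀ R ∈ Ioo (0 : ℝ) 1, s R ≤ r R)
    (hint : IntegrableOn (fun R => ρ0 R * Mfun ρ0 R * (s R)⁻¹ * R ^ 2) (Ioo 0 1)) :
    Ipot ρ0 r ≤ Ipot ρ0 s := by
  have hρM : ∀ R ∈ Ioo (0 : ℝ) 1, 0 ≤ ρ0 R * Mfun ρ0 R := fun R hR =>
    mul_nonneg (hρ R hR)
      (Mfun_nonneg hR.1.le fun u hu => hρ u ⟨hu.1, hu.2.trans_lt hR.2⟩)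
  refine integral_mono_of_nonneg (ae_restrict_of_forall_mem measurableSet_Ioo fun R hR => ?_) hint
    (ae_restrict_of_forall_mem measurableSet_Ioo fun R hR => ?_)
  · have hrR : 0 < r R := (hs R hR).trans_le (hsr R hR)
    exact mul_nonneg (mul_nonneg (hρM R hR) (inv_nonneg.2 hrR.le)) (sq_nonneg R)
  · have hρMR := hρM R hR
    have hsR := hs R hR
    have hsrR := hsr R hR
    dsimp only
    gcongr

end Potential

/-! ### Filling the cavity -/

/-- The deformation `r` with its core `[0, c)` replaced by the homogeneous deformation `R ↦ k R`.
When `r c = k c` this is the competitor that closes the cavity of `r`. -/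
noncomputable def fillCavity (k c : ℝ) (r : ℝ → ℝ) : ℝ → ℝ :=
  (Iio c).piecewise (fun R => k * R) r

/-- The weak derivative of `fillCavity k c r`, where `r'` is that of `r`. -/
noncomputable def fillCavityDeriv (k c : ℝ) (r' : ℝ → ℝ) : ℝ → ℝ :=
  (Iio c).piecewise (fun _ => k) r'

section fillCavity

variable {k c m R : ℝ} {r : ℝ → ℝ}

theorem fillCavity_of_lt (hR : R < c) : fillCavity k c r R = k * R :=
  piecewise_eq_of_mem _ _ _ hR

theorem fillCavity_of_le (hR : c ≤ R) : fillCavity k c r R = r R :=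
  piecewise_eq_of_notMem _ _ _ (notMem_Iio.2 hR)

theorem fillCavity_le (h : R < c → k * R ≤ r R) : fillCavity k c r R ≤ r R := by
  rcases lt_or_ge R c with hR | hR
  · exact (fillCavity_of_lt hR).trans_le (h hR)
  · exact (fillCavity_of_le hR).le

theorem mul_le_fillCavity (hR : 0 ≤ R) (hmk : m ≤ k) (hmr : m * R ≤ r R) :
    m * R ≤ fillCavity k c r R := by
  rcases lt_or_ge R c with hRc | hRc
  · rw [fillCavity_of_lt hRc]
    gcongr
  · rwa [fillCavity_of_le hRc]

end fillCavity

namespace Adm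

variable {Φt : ℝ → ℝ → ℝ → ℝ} {ρ0 : ℝ → ℝ} {lam k c : ℝ} {r r' : ℝ → ℝ}

theorem hasIntegrableDerivOn (h : Adm Φt lam r r') : HasIntegrableDerivOn r r' 0 1 :=
  ⟨h.1, h.2.1⟩

theorem ae_deriv_pos (h : Adm Φt lam r r') :
    ∀ᵐ R ∂volume.restrict (Ioo (0 : ℝ) 1), 0 < r' R :=
  h.2.2.1

theorem apply_one (h : Adm Φt lam r r') : r 1 = lam :=
  h.2.2.2.1

theorem apply_zero_nonneg (h : Adm Φt lam r r') : 0 ≤ r 0 :=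
  h.2.2.2.2.1

theorem integrableOn_radialEnergyDensity (h : Adm Φt lam r r') :
    IntegrableOn (radialEnergyDensity Φt r r') (Ioo 0 1) :=
  h.2.2.2.2.2

theorem monotoneOn (h : Adm Φt lam r r') : MonotoneOn r (Icc 0 1) :=
  h.hasIntegrableDerivOn.monotoneOn (h.ae_deriv_pos.mono fun _ => le_of_lt)

theorem mul_le_apply (h : Adm Φt lam r r') {R : ℝ} (hR : R ∈ Icc (0 : ℝ) 1) : r 0 * R ≤ r R :=
  (mul_le_of_le_one_right h.apply_zero_nonneg hR.2).trans
    (h.monotoneOn (left_mem_Icc.2 zero_le_one) hR hR.1)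

theorem adm_fillCavity (h : Adm Φt lam r r') (hk : 0 < k) (hc : c ∈ Ioc (0 : ℝ) 1)
    (hrc : r c = k * c) : Adm Φt lam (fillCavity k c r) (fillCavityDeriv k c r') := by
  have hderiv : HasIntegrableDerivOn (fillCavity k c r) (fillCavityDeriv k c r') 0 1 :=
    (hasIntegrableDerivOn_const_mul k 0 c).piecewise_Iio
      (h.hasIntegrableDerivOn.mono_left (Ioc_subset_Icc_self hc)) (Ioc_subset_Icc_self hc) hrc.symm
  refine ⟨hderiv.intervalIntegrable, hderiv.eq_add_integral, ?_, ?_, ?_, ?_⟩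
  · filter_upwards [h.ae_deriv_pos] with R hR
    by_cases hRc : R ∈ Iio c
    · rwa [fillCavityDeriv, piecewise_eq_of_mem _ _ _ hRc]
    · rwa [fillCavityDeriv, piecewise_eq_of_notMem _ _ _ hRc]
  · rw [fillCavity_of_le hc.2, h.apply_one]
  · rw [fillCavity_of_lt hc.1, mul_zero]
  · change Integrable (radialEnergyDensity Φt _ _) _
    rw [fillCavity, fillCavityDeriv, radialEnergyDensity_piecewise]
    refine Integrable.piecewise measurableSet_Iio ?_
      h.integrableOn_radialEnergyDensity.integrableOn
    rw [IntegrableOn, restrict_Ioo_restrict_Iio hc.2]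
    exact integrableOn_radialEnergyDensity_const_mul Φt k c

theorem Imec_fillCavity_lt (h : Adm Φt lam r r') (hc : c ∈ Ioc (0 : ℝ) 1)
    (hlt : c ^ 3 / 3 * Φt k k k < ∫ R in Ioo 0 c, radialEnergyDensity Φt r r' R) :
    Imec Φt (fillCavity k c r) (fillCavityDeriv k c r') < Imec Φt r r' := by
  change ∫ R in Ioo 0 1, radialEnergyDensity Φt _ _ R < ∫ R in Ioo 0 1, radialEnergyDensity Φt _ _ R
  rw [fillCavity, fillCavityDeriv, radialEnergyDensity_piecewise]
  refine integral_piecewise_lt_integral measurableSet_Iio ?_ h.integrableOn_radialEnergyDensity ?_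
  · rw [IntegrableOn, restrict_Ioo_restrict_Iio hc.2]
    exact integrableOn_radialEnergyDensity_const_mul Φt k c
  · rwa [restrict_Ioo_restrict_Iio hc.2, setIntegral_radialEnergyDensity_const_mul Φt k hc.1.le]

theorem Ipot_le_Ipot_fillCavity (h : Adm Φt lam r r') (hk : 0 < k) (hr0 : 0 < r 0)
    (hc : c ∈ Ioc (0 : ℝ) 1) (hrc : r c = k * c) (hlt : ∀ R ∈ Ico 0 c, k * R < r R)
    (hρ_nonneg : ∀ R ∈ Ioo (0 : ℝ) 1, 0 ≤ ρ0 R)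
    (hρ_int : IntegrableOn (fun R => R * ρ0 R) (Ioo 0 1)) :
    Ipot ρ0 r ≤ Ipot ρ0 (fillCavity k c r) := by
  have hm : 0 < min k (r 0) := lt_min hk hr0
  have hge : ∀ R ∈ Ioo (0 : ℝ) 1, min k (r 0) * R ≤ fillCavity k c r R := fun R hR =>
    mul_le_fillCavity hR.1.le (min_le_left _ _) <|
      (mul_le_mul_of_nonneg_right (min_le_right _ _) hR.1.le).trans
        (h.mul_le_apply (Ioo_subset_Icc_self hR))
  have hcont : ContinuousOn (fillCavity k c r) (Ioo 0 1) :=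
    (h.adm_fillCavity hk hc hrc).hasIntegrableDerivOn.continuousOn.mono Ioo_subset_Icc_self
  exact Ipot_le_Ipot_of_le hρ_nonneg (fun R hR => (mul_pos hm hR.1).trans_le (hge R hR))
    (fun R hR => fillCavity_le fun hRc => (hlt R ⟨hR.1.le, hRc⟩).le)
    (integrableOn_Ipot_integrand hm hρ_int hcont hge)

end Adm

theorem stmt11_general {ρ0 : ℝ → ℝ} (hρ_nonneg : ∀ R ∈ Ioo (0 : ℝ) 1, 0 ≤ ρ0 R)
    (hρ_int : IntegrableOn (fun R => R * ρ0 R) (Ioo 0 1))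
    {Φt : ℝ → ℝ → ℝ → ℝ} {lam : ℝ} {r r' : ℝ → ℝ} (hadm : Adm Φt lam r r')
    (hmin : ∀ s s' : ℝ → ℝ, Adm Φt lam s s' → Ifun Φt ρ0 r r' ≤ Ifun Φt ρ0 s s')
    {lamh : ℝ} (hlamh : lam ≤ lamh)
    (hsub : ∀ R0 ∈ Ioc (0 : ℝ) 1, ∀ s s' : ℝ → ℝ, HasIntegrableDerivOn s s' 0 R0 →
      (∀ᵐ R ∂volume.restrict (Ioo (0 : ℝ) R0), 0 < s' R) → 0 < s 0 → s R0 = lamh * R0 →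
      IntegrableOn (radialEnergyDensity Φt s s') (Ioo 0 R0) →
      R0 ^ 3 / 3 * Φt lamh lamh lamh < ∫ R in Ioo 0 R0, radialEnergyDensity Φt s s' R) :
    r 0 = 0 := by
  by_contra hne
  have hr0 : 0 < r 0 := hadm.apply_zero_nonneg.lt_of_ne' hne
  have hr1 : r 1 ≤ lamh := hadm.apply_one.trans_le hlamh
  have hk : 0 < lamh := hr0.trans_le <| (hadm.monotoneOn (left_mem_Icc.2 zero_le_one)
    (right_mem_Icc.2 zero_le_one) zero_le_one).trans hr1
  obtain ⟨c, hc, hrc, hlt⟩ : ∃ c ∈ Ioc (0 : ℝ) 1, r c = lamh * c ∧ ∀ R ∈ Ico 0 c, lamh * R < r R :=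
    exists_first_eq_of_lt_of_le zero_le_one hadm.hasIntegrableDerivOn.continuousOn
      (continuousOn_const.mul continuousOn_id) (by rwa [mul_zero]) (by rwa [mul_one])
  have hsubset : Ioo 0 c ⊆ Ioo 0 1 := Ioo_subset_Ioo_right hc.2
  have hmec := hadm.Imec_fillCavity_lt hc <| hsub c hc r r'
    (hadm.hasIntegrableDerivOn.mono_right (Ioc_subset_Icc_self hc))
    (ae_restrict_of_ae_restrict_of_subset hsubset hadm.ae_deriv_pos) hr0 hrc
    (hadm.integrableOn_radialEnergyDensity.mono_set hsubset)
  have hpot := hadm.Ipot_le_Ipot_fillCavity hk hr0 hc hrc hlt hρ_nonneg hρ_int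
  refine (hmin _ _ (hadm.adm_fillCavity hk hc hrc)).not_gt ?_
  unfold Ifun
  linarith

theorem stmt11 (ρ0 : ℝ → ℝ) (k0 k1 : ℝ) (hk0 : 0 < k0) (hρmeas : Measurable ρ0)
    (hρ : ∀ R ∈ Icc (0:ℝ) 1, k0 ≤ ρ0 R ∧ ρ0 R ≤ k1)
    (Φt : ℝ → ℝ → ℝ → ℝ)
    (hΦt0 : ∀ v1 ∈ Ioi (0:ℝ), ∀ v2 ∈ Ioi (0:ℝ), ∀ v3 ∈ Ioi (0:ℝ), 0 ≤ Φt v1 v2 v3)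
    (hΦtsym : ∀ v1 ∈ Ioi (0:ℝ), ∀ v2 ∈ Ioi (0:ℝ), ∀ v3 ∈ Ioi (0:ℝ),
      Φt v1 v2 v3 = Φt v2 v1 v3 ∧ Φt v1 v2 v3 = Φt v1 v3 v2)
    (lam : ℝ) (hlam : 0 < lam)
    (r r' : ℝ → ℝ) (hadm : Adm Φt lam r r')
    (hmin : ∀ s s' : ℝ → ℝ, Adm Φt lam s s' → Ifun Φt ρ0 r r' ≤ Ifun Φt ρ0 s s')
    -- `λ̂ > λ` is subcritical: any cavitating deformation on `[0,R₀]` with boundary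
    -- displacement `λ̂ R₀` has strictly more mechanical energy than the homogeneous one
    (lamh : ℝ) (hlamh : lam < lamh)
    (hsub : ∀ R0 ∈ Ioc (0:ℝ) 1, ∀ s s' : ℝ → ℝ,
      IntervalIntegrable s' volume 0 R0 →
      (∀ x ∈ Icc (0:ℝ) R0, s x = s 0 + ∫ t in (0:ℝ)..x, s' t) →
      (∀ᵐ R ∂volume.restrict (Ioo (0:ℝ) R0), 0 < s' R) →
      0 < s 0 → s R0 = lamh * R0 →
      IntegrableOn (fun R => Φt (s' R) (s R / R) (s R / R) * R ^ 2) (Ioo (0:ℝ) R0) →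
      R0 ^ 3 / 3 * Φt lamh lamh lamh <
        ∫ R in Ioo (0:ℝ) R0, Φt (s' R) (s R / R) (s R / R) * R ^ 2) :
    r 0 = 0 := by
  exact stmt11_general
    (fun R hR => hk0.le.trans (hρ R (Ioo_subset_Icc_self hR)).1)
    (integrableOn_mul_of_mem_Icc hρmeas.aemeasurable fun R hR => hρ R (Ioo_subset_Icc_self hR))
    hadm hmin hlamh.le
    fun R0 hR0 s s' hs => hsub R0 hR0 s s' hs.intervalIntegrable hs.eq_add_integral
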